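/- There exist a real number R with 1.16 < R < 1.17 and a nonzero smooth function χ: ℝ → ℝ whose support is contained in (0, π/3) such that, defining for k = 0, 1, …, 5 the functions φ_k on the plane in polar coordinates by φ_k(u cos v, u sin v) = u·χ(v − kπ/3) for u > 0 and v ∈ [0, 2π), the functions φ₀, …, φ₅ have pairwise disjoint supports, satisfy Q⁵_R(φ_k) < 0 for each k, and Q⁵_R is negative definite on their 6-dimensional linear span; consequently ind_b(Σ₁⁵(R)) ≥ 6. -/

import Mathlib

noncomputable section
open MeasureTheory Real

/-- The plane `ℝ²` as a Euclidean space. -/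
abbrev E2 : Type := EuclideanSpace ℝ (Fin 2)

/-- The point of `ℝ²` with Cartesian coordinates `(x, y)`. -/
def toE2 (x y : ℝ) : E2 := (WithLp.equiv 2 (Fin 2 → ℝ)).symm ![x, y]

/-- The second-variation quadratic form of the dihedral Enneper surface `Σ₁ⁿ(R)` of
order `n` and radius `R`, in the conformal planar coordinate `w`. -/
def QE (n : ℕ) (R : ℝ) (φ : E2 → ℝ) : ℝ :=
  ∫ w in Metric.ball (0 : E2) R,
    (‖gradient φ w‖ ^ 2 -
      (8 * (n : ℝ) ^ 2 * ‖w‖ ^ (2 * n - 2) / (1 + ‖w‖ ^ (2 * n)) ^ 2) * φ w ^ 2)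

/-- The second-variation quadratic form of the complete dihedral Enneper surface `Σ₁ⁿ`
(`R = ∞`). -/
def QEinf (n : ℕ) (φ : E2 → ℝ) : ℝ :=
  ∫ w : E2,
    (‖gradient φ w‖ ^ 2 -
      (8 * (n : ℝ) ^ 2 * ‖w‖ ^ (2 * n - 2) / (1 + ‖w‖ ^ (2 * n)) ^ 2) * φ w ^ 2)

/-- Membership in `F(B(0,R))`: smooth on the open ball `B(0,R)` with all partial
derivatives of order `≤ 2` bounded there. -/
def memFE (R : ℝ) (φ : E2 → ℝ) : Prop :=
  ContDiffOn ℝ (⊤ : ℕ∞) φ (Metric.ball (0 : E2) R) ∧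
    ∀ i : ℕ, i ≤ 2 → ∃ C : ℝ,
      ∀ w ∈ Metric.ball (0 : E2) R, ‖iteratedFDerivWithin ℝ i φ (Metric.ball (0 : E2) R) w‖ ≤ C

/-- The modified index `ind_b(Σ₁ⁿ(R))`: the supremum of the dimensions of
finite-dimensional subspaces of `F(B(0,R))` on which `Qⁿ_R` is negative definite. -/
def indbE (n : ℕ) (R : ℝ) : ℕ∞ :=
  sSup {d : ℕ∞ | ∃ V : Submodule ℝ (E2 → ℝ), FiniteDimensional ℝ V ∧
    (∀ φ ∈ V, memFE R φ) ∧ (∀ φ ∈ V, φ ≠ 0 → QE n R φ < 0) ∧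
    d = (Module.finrank ℝ V : ℕ∞)}

/-!
In polar coordinates the quadratic form separates on functions `ρ(u) h(v)`: the angular part enters
only through the ratio of `∫ h'²` to `∫ h²`. An angular profile with `-h h'' ≤ μ h²` has ratio at
most `μ`, by integration by parts. This pointwise condition survives taking linear combinations of
functions with disjoint supports, so it is enough to exhibit one bump function on `(0, β)`
satisfying it with `μ = 20 / β²`, and its rotated copies then span a space on which the form is
negative as soon as `(1 + μ) R² / 2` is less than the integral of `u³` times the radial potential.
The arithmetic-geometric mean inequality bounds the integrand below by a function of `u^(2n)` times
its derivative, whose antiderivative is elementary.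

The functions `u h(v)` are not smooth at the origin. For the index, the factor `u` is replaced by a
smooth function vanishing near `0`, which changes the radial integrals by an arbitrarily small
amount.
-/

open Set Topology
open scoped ContDiff RealInnerProductSpace

/-! ### Polar coordinates -/

/-- The point of the plane with polar coordinates `(u, v)`. -/
def polarPoint (u v : ℝ) : E2 := toE2 (u * cos v) (u * sin v)

/-- The standard identification of the plane with `ℂ`, through which `Complex.arg` and the polar
change of variables are applied. -/
def toComplex : E2 ≃ₗᵢ[ℝ] ℂ := Complex.orthonormalBasisOneI.repr.symm

/-- The polar angle in `(0, 2π]`. The branch is cut along the positive half-axis, which bounds a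
sector, rather than along the negative one, as for `Complex.arg`. -/
def polarAngle (w : E2) : ℝ := Complex.arg (-toComplex w) + π

@[simp] lemma polarPoint_apply_zero (u v : ℝ) : polarPoint u v 0 = u * cos v := by
  simp [polarPoint, toE2]

@[simp] lemma polarPoint_apply_one (u v : ℝ) : polarPoint u v 1 = u * sin v := by
  simp [polarPoint, toE2]

lemma toComplex_polarPoint (u v : ℝ) :
    toComplex (polarPoint u v) = u * (Complex.cos v + Complex.sin v * Complex.I) := by
  simp only [toComplex, Complex.orthonormalBasisOneI_repr_symm_apply, polarPoint_apply_zero,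
    polarPoint_apply_one]
  push_cast
  ring

lemma polarPoint_add_pi (u v : ℝ) : polarPoint u (v + π) = -polarPoint u v := by
  ext i
  fin_cases i <;> simp

lemma polarPoint_add_two_pi (u v : ℝ) : polarPoint u (v + 2 * π) = polarPoint u v := by
  simp only [polarPoint, cos_add_two_pi, sin_add_two_pi]

lemma norm_sq_eq_inner_polarPoint (w : E2) (v : ℝ) :
    ‖w‖ ^ 2 = ⟪w, polarPoint 1 v⟫ ^ 2 + ⟪w, polarPoint 1 (v + π / 2)⟫ ^ 2 := by
  simp only [EuclideanSpace.real_norm_sq_eq, PiLp.inner_apply, Fin.sum_univ_two,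
    polarPoint_apply_zero, polarPoint_apply_one, cos_add_pi_div_two, sin_add_pi_div_two,
    RCLike.inner_apply, conj_trivial]
  linear_combination -(w 0 ^ 2 + w 1 ^ 2) * sin_sq_add_cos_sq v

lemma norm_polarPoint {u : ℝ} (hu : 0 ≤ u) (v : ℝ) : ‖polarPoint u v‖ = u := by
  rw [← toComplex.norm_map, toComplex_polarPoint, norm_mul, Complex.norm_cos_add_sin_mul_I,
    mul_one, Complex.norm_real, norm_of_nonneg hu]

lemma polarPoint_ne_zero {u : ℝ} (hu : 0 < u) (v : ℝ) : polarPoint u v ≠ 0 := by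
  rw [← norm_pos_iff, norm_polarPoint hu.le]
  exact hu

lemma polarAngle_polarPoint {u v : ℝ} (hu : 0 < u) (hv : v ∈ Ioc 0 (2 * π)) :
    polarAngle (polarPoint u v) = v := by
  rw [polarAngle, ← map_neg, ← sub_add_cancel v π, polarPoint_add_pi, neg_neg,
    toComplex_polarPoint, Complex.arg_mul_cos_add_sin_mul_I hu]
  constructor <;> linarith [hv.1, hv.2]

lemma hasDerivAt_toE2 {f g : ℝ → ℝ} {f' g' t : ℝ} (hf : HasDerivAt f f' t)
    (hg : HasDerivAt g g' t) : HasDerivAt (fun s => toE2 (f s) (g s)) (toE2 f' g') t := by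
  have toE2_eq (x y : ℝ) : toE2 x y = x • toE2 1 0 + y • toE2 0 1 := by
    ext i
    fin_cases i <;> simp [toE2]
  simp_rw [toE2_eq (f _), toE2_eq f']
  exact (hf.smul_const _).add (hg.smul_const _)

lemma hasDerivAt_polarPoint_radius (u v : ℝ) :
    HasDerivAt (fun s => polarPoint s v) (polarPoint 1 v) u :=
  hasDerivAt_toE2 ((hasDerivAt_id u).mul_const _) ((hasDerivAt_id u).mul_const _)

lemma hasDerivAt_polarPoint_angle (u v : ℝ) :
    HasDerivAt (polarPoint u) (u • polarPoint 1 (v + π / 2)) v := by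
  refine (hasDerivAt_toE2 ((hasDerivAt_cos v).const_mul u)
    ((hasDerivAt_sin v).const_mul u)).congr_deriv ?_
  ext i
  fin_cases i <;> simp [toE2, cos_add_pi_div_two, sin_add_pi_div_two]

lemma norm_gradient_sq_polarPoint {F : E2 → ℝ} {u v a b : ℝ} (hu : u ≠ 0)
    (hF : DifferentiableAt ℝ F (polarPoint u v))
    (ha : HasDerivAt (fun s => F (polarPoint s v)) a u)
    (hb : HasDerivAt (fun t => F (polarPoint u t)) b v) :
    ‖gradient F (polarPoint u v)‖ ^ 2 = a ^ 2 + (b / u) ^ 2 := by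
  have hr := (hF.hasFDerivAt.comp_hasDerivAt u (hasDerivAt_polarPoint_radius u v)).unique ha
  have ht := (hF.hasFDerivAt.comp_hasDerivAt v (hasDerivAt_polarPoint_angle u v)).unique hb
  rw [map_smul, smul_eq_mul] at ht
  rw [norm_sq_eq_inner_polarPoint _ v, inner_gradient_left, inner_gradient_left, hr, ← ht,
    mul_div_cancel_left₀ _ hu]

lemma setIntegral_ball_eq_polar (f : E2 → ℝ) (R : ℝ) :
    ∫ w in Metric.ball (0 : E2) R, f w =
      ∫ p in Ioo 0 R ×ˢ Ioo 0 (2 * π), p.1 * f (polarPoint p.1 p.2) := by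
  let negToComplex : E2 ≃ₗᵢ[ℝ] ℂ := toComplex.trans (.neg ℝ)
  have hsymm (p : ℝ × ℝ) :
      negToComplex.symm (Complex.polarCoord.symm p) = polarPoint p.1 (p.2 + π) := by
    rw [LinearIsometryEquiv.symm_apply_eq, polarPoint_add_pi, map_neg]
    simp [negToComplex, toComplex_polarPoint, Complex.polarCoord_symm_apply]
  have hpreimage : (· + ((0 : ℝ), π)) ⁻¹' (Ioo 0 R ×ˢ Ioo 0 (2 * π)) =
      polarCoord.target ∩ Prod.fst ⁻¹' Iio R := by
    ext ⟨u, v⟩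
    simp only [polarCoord_target, mem_preimage, Prod.mk_add_mk, mem_prod, mem_Ioo, mem_inter_iff,
      mem_Ioi, mem_Iio, add_zero]
    grind
  have hshift : ∫ p in Ioo 0 R ×ˢ Ioo 0 (2 * π), p.1 * f (polarPoint p.1 p.2) =
      ∫ p in polarCoord.target ∩ Prod.fst ⁻¹' Iio R, p.1 * f (polarPoint p.1 (p.2 + π)) := by
    rw [← (measurePreserving_add_right volume ((0 : ℝ), π)).setIntegral_preimage_emb
      (measurableEmbedding_addRight _), hpreimage]
    simp only [Prod.fst_add, Prod.snd_add, add_zero]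
  rw [hshift, ← integral_indicator Metric.isOpen_ball.measurableSet,
    ← negToComplex.symm.measurePreserving.integral_comp
      negToComplex.symm.toMeasurableEquiv.measurableEmbedding,
    ← Complex.integral_comp_polarCoord_symm,
    ← setIntegral_indicator (measurable_fst measurableSet_Iio)]
  refine setIntegral_congr_fun polarCoord.open_target.measurableSet fun p hp => ?_
  have hp : 0 < p.1 := hp.1
  simp only [hsymm, indicator, mem_preimage, Metric.mem_ball, dist_zero_right,
    norm_polarPoint hp.le, mem_Iio, smul_eq_mul, mul_ite, mul_zero]

lemma polarPoint_norm_arg (w : E2) : polarPoint ‖w‖ (Complex.arg (toComplex w)) = w := by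
  apply toComplex.injective
  rw [toComplex_polarPoint, ← toComplex.norm_map w, Complex.norm_mul_cos_add_sin_mul_I]

lemma polarAngle_eq_ite {w : E2} (hw : w ≠ 0) :
    polarAngle w = if 0 < Complex.arg (toComplex w) then Complex.arg (toComplex w)
      else Complex.arg (toComplex w) + 2 * π := by
  have hpos : 0 < ‖w‖ := norm_pos_iff.2 hw
  have hgt := Complex.neg_pi_lt_arg (toComplex w)
  have hle := Complex.arg_le_pi (toComplex w)
  nth_rw 1 [← polarPoint_norm_arg w]
  split_ifs with h
  · exact polarAngle_polarPoint hpos ⟨h, by linarith⟩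
  · rw [← polarPoint_add_two_pi]
    exact polarAngle_polarPoint hpos ⟨by linarith, by linarith⟩

lemma contDiffAt_arg {z : ℂ} (hz : z ∈ Complex.slitPlane) {m : WithTop ℕ∞} :
    ContDiffAt ℝ m Complex.arg z := by
  simp_rw [funext fun z => (Complex.log_im z).symm]
  exact Complex.imCLM.contDiff.contDiffAt.comp z ((Complex.contDiffAt_log hz).restrict_scalars ℝ)

lemma contDiffAt_comp_polarAngle {h : ℝ → ℝ} {m : WithTop ℕ∞} (hh : ContDiff ℝ m h)
    (hsupp : Function.support h ⊆ Ioo 0 (2 * π)) {w : E2} (hw : w ≠ 0) :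
    ContDiffAt ℝ m (fun w => h (polarAngle w)) w := by
  have hC : ContDiff ℝ m toComplex := toComplex.contDiff
  have hzero := Function.support_subset_iff'.1 hsupp
  have hw' : toComplex w ≠ 0 := toComplex.map_eq_zero_iff.not.2 hw
  rcases Complex.mem_slitPlane_or_neg_mem_slitPlane hw' with hslit | hslit
  · have harg : ContDiffAt ℝ m (fun w => Complex.arg (toComplex w)) w :=
      (contDiffAt_arg hslit).comp w hC.contDiffAt
    have hunfold : (fun w => h (polarAngle w)) =ᶠ[𝓝 w] fun w =>
        h (Complex.arg (toComplex w)) + h (Complex.arg (toComplex w) + 2 * π) := by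
      filter_upwards [isOpen_ne.mem_nhds hw] with w hw
      rw [polarAngle_eq_ite hw]
      split_ifs with hpos
      · rw [hzero (_ + 2 * π) fun hmem => by linarith [hmem.2], add_zero]
      · rw [hzero (Complex.arg _) fun hmem => hpos hmem.1, zero_add]
    exact ((hh.contDiffAt.comp w harg).add
      (hh.contDiffAt.comp w (harg.add contDiffAt_const))).congr_of_eventuallyEq hunfold
  · exact hh.contDiffAt.comp w
      (((contDiffAt_arg hslit).comp w hC.contDiffAt.neg).add contDiffAt_const)

/-! ### Functions with separated polar variables -/

/-- The function `ρ(u) h(v)` in the polar coordinates `(u, v)`. -/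
def polarFun (ρ h : ℝ → ℝ) (w : E2) : ℝ := ρ ‖w‖ * h (polarAngle w)

section PolarFun

variable {ρ h : ℝ → ℝ} {m : WithTop ℕ∞}

lemma polarFun_polarPoint (ρ : ℝ → ℝ) (hsupp : Function.support h ⊆ Ioo 0 (2 * π)) {u v : ℝ}
    (hu : 0 < u) (hv : v ∈ Icc 0 (2 * π)) : polarFun ρ h (polarPoint u v) = ρ u * h v := by
  rw [polarFun, norm_polarPoint hu.le]
  rcases hv.1.eq_or_lt with rfl | hpos
  · have hzero := Function.support_subset_iff'.1 hsupp
    rw [← polarPoint_add_two_pi, zero_add, polarAngle_polarPoint hu ⟨two_pi_pos, le_rfl⟩,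
      hzero 0 (by simp), hzero (2 * π) (by simp)]
  · rw [polarAngle_polarPoint hu ⟨hpos, hv.2⟩]

lemma disjoint_support_polarFun (ρ : ℝ → ℝ) {g h : ℝ → ℝ}
    (hgh : Disjoint (Function.support g) (Function.support h)) :
    Disjoint (Function.support (polarFun ρ g)) (Function.support (polarFun ρ h)) :=
  (hgh.preimage polarAngle).mono (fun _ hw => right_ne_zero_of_mul hw)
    fun _ hw => right_ne_zero_of_mul hw

lemma sum_smul_polarFun {ι : Type*} [Fintype ι] (ρ : ℝ → ℝ) (c : ι → ℝ) (g : ι → ℝ → ℝ) :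
    ∑ k, c k • polarFun ρ (g k) = polarFun ρ fun v => ∑ k, c k * g k v := by
  ext w
  simp only [Finset.sum_apply, Pi.smul_apply, smul_eq_mul, polarFun, Finset.mul_sum,
    mul_left_comm (ρ _)]

lemma contDiffAt_polarFun (hρ : ContDiff ℝ m ρ) (hh : ContDiff ℝ m h)
    (hsupp : Function.support h ⊆ Ioo 0 (2 * π)) {w : E2} (hw : w ≠ 0) :
    ContDiffAt ℝ m (polarFun ρ h) w :=
  (hρ.contDiffAt.comp w (contDiffAt_norm ℝ hw)).mul (contDiffAt_comp_polarAngle hh hsupp hw)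

lemma contDiff_polarFun (hρ : ContDiff ℝ m ρ) (hh : ContDiff ℝ m h)
    (hsupp : Function.support h ⊆ Ioo 0 (2 * π)) {ε : ℝ} (hε : 0 < ε)
    (hρ_zero : ∀ u ≤ ε, ρ u = 0) : ContDiff ℝ m (polarFun ρ h) := by
  refine contDiff_iff_contDiffAt.2 fun w => ?_
  rcases eq_or_ne w 0 with rfl | hw
  · refine (contDiffAt_const (c := (0 : ℝ))).congr_of_eventuallyEq ?_
    filter_upwards [Metric.ball_mem_nhds (0 : E2) hε] with w hw
    rw [polarFun, hρ_zero _ (mem_ball_zero_iff.1 hw).le, zero_mul]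
  · exact contDiffAt_polarFun hρ hh hsupp hw

end PolarFun

/-! ### The quadratic form in polar coordinates -/

/-- The potential of the second variation, as a function of the radius. -/
def enneperPotential (n : ℕ) (u : ℝ) : ℝ :=
  8 * (n : ℝ) ^ 2 * u ^ (2 * n - 2) / (1 + u ^ (2 * n)) ^ 2

lemma one_add_pow_two_mul_pos (n : ℕ) (u : ℝ) : 0 < 1 + u ^ (2 * n) := by
  rw [pow_mul]
  positivity

lemma continuous_enneperPotential (n : ℕ) : Continuous (enneperPotential n) :=
  Continuous.div (by fun_prop) (by fun_prop) fun u => (pow_pos (one_add_pow_two_mul_pos n u) 2).ne'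

lemma enneperPotential_nonneg (n : ℕ) {u : ℝ} (hu : 0 ≤ u) : 0 ≤ enneperPotential n u := by
  have := one_add_pow_two_mul_pos n u
  unfold enneperPotential
  positivity

lemma intervalIntegral_eq_setIntegral_Ioo {a b : ℝ} (hab : a ≤ b) (f : ℝ → ℝ) :
    ∫ x in a..b, f x = ∫ x in Ioo a b, f x := by
  rw [intervalIntegral.integral_of_le hab, integral_Ioc_eq_integral_Ioo]

lemma integrableOn_Ioo_of_continuous {f : ℝ → ℝ} (hf : Continuous f) (a b : ℝ) :
    IntegrableOn f (Ioo a b) :=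
  hf.integrableOn_Icc.mono_set Ioo_subset_Icc_self

lemma sq_div_self_le {ρ : ℝ → ℝ} {u : ℝ} (hu : 0 < u) (hle : |ρ u| ≤ u) : ρ u ^ 2 / u ≤ u := by
  rw [div_le_iff₀ hu, ← sq]
  exact sq_le_sq.2 (hle.trans (le_abs_self u))

lemma integrableOn_sq_div_self {ρ : ℝ → ℝ} (hρ : Continuous ρ) (hle : ∀ u, 0 < u → |ρ u| ≤ u)
    (R : ℝ) : IntegrableOn (fun u => ρ u ^ 2 / u) (Ioo 0 R) := by
  refine Integrable.mono' (integrableOn_Ioo_of_continuous continuous_id 0 R)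
    (Measurable.aestronglyMeasurable (by fun_prop)) ?_
  refine (ae_restrict_iff' measurableSet_Ioo).2 (.of_forall fun u hu => ?_)
  have hu : 0 < u := hu.1
  rw [norm_of_nonneg (by positivity)]
  exact sq_div_self_le hu (hle u hu)

lemma norm_gradient_polarFun_sq {ρ h : ℝ → ℝ} (hρ : ContDiff ℝ 1 ρ) (hh : ContDiff ℝ 1 h)
    (hsupp : Function.support h ⊆ Ioo 0 (2 * π)) {u v : ℝ} (hu : 0 < u)
    (hv : v ∈ Ioo 0 (2 * π)) :
    ‖gradient (polarFun ρ h) (polarPoint u v)‖ ^ 2 =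
      (deriv ρ u * h v) ^ 2 + (ρ u * deriv h v / u) ^ 2 := by
  refine norm_gradient_sq_polarPoint hu.ne' ((contDiffAt_polarFun hρ hh hsupp
    (polarPoint_ne_zero hu v)).differentiableAt one_ne_zero) ?_ ?_
  · refine ((hρ.differentiable one_ne_zero u).hasDerivAt.mul_const (h v)).congr_of_eventuallyEq ?_
    filter_upwards [Ioi_mem_nhds hu] with s hs
    exact polarFun_polarPoint ρ hsupp hs (Ioo_subset_Icc_self hv)
  · refine ((hh.differentiable one_ne_zero v).hasDerivAt.const_mul (ρ u)).congr_of_eventuallyEq ?_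
    filter_upwards [Ioo_mem_nhds hv.1 hv.2] with t ht
    exact polarFun_polarPoint ρ hsupp hu (Ioo_subset_Icc_self ht)

lemma QE_polarFun (n : ℕ) {R : ℝ} (hR : 0 ≤ R) {ρ h : ℝ → ℝ} (hρ : ContDiff ℝ 1 ρ)
    (hle : ∀ u, 0 < u → |ρ u| ≤ u) (hh : ContDiff ℝ 1 h)
    (hsupp : Function.support h ⊆ Ioo 0 (2 * π)) :
    QE n R (polarFun ρ h) =
      (∫ u in 0..R, u * (deriv ρ u ^ 2 - enneperPotential n u * ρ u ^ 2)) *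
        (∫ v in 0..2 * π, h v ^ 2) +
      (∫ u in 0..R, ρ u ^ 2 / u) * ∫ v in 0..2 * π, deriv h v ^ 2 := by
  have hρ_cont := hρ.continuous
  have hh_cont := hh.continuous
  have hW_cont := continuous_enneperPotential n
  have hradial : IntegrableOn (fun u => u * (deriv ρ u ^ 2 - enneperPotential n u * ρ u ^ 2))
      (Ioo 0 R) := integrableOn_Ioo_of_continuous (by fun_prop) _ _
  have hangular : IntegrableOn (fun v => h v ^ 2) (Ioo 0 (2 * π)) :=
    integrableOn_Ioo_of_continuous (by fun_prop) _ _
  have hangular' : IntegrableOn (fun v => deriv h v ^ 2) (Ioo 0 (2 * π)) :=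
    integrableOn_Ioo_of_continuous (by fun_prop) _ _
  simp only [QE, setIntegral_ball_eq_polar, intervalIntegral_eq_setIntegral_Ioo hR,
    intervalIntegral_eq_setIntegral_Ioo two_pi_pos.le]
  rw [← setIntegral_prod_mul, ← setIntegral_prod_mul, ← Measure.volume_eq_prod, ← integral_add]
  · refine setIntegral_congr_fun (measurableSet_Ioo.prod measurableSet_Ioo) ?_
    rintro ⟨u, v⟩ ⟨⟨hu, -⟩, hv⟩
    have hu : 0 < u := hu
    simp only
    rw [norm_gradient_polarFun_sq hρ hh hsupp hu hv, norm_polarPoint hu.le,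
      polarFun_polarPoint ρ hsupp hu (Ioo_subset_Icc_self hv), enneperPotential]
    field_simp
    ring
  · rw [Measure.volume_eq_prod, ← Measure.prod_restrict]
    exact hradial.mul_prod hangular
  · rw [Measure.volume_eq_prod, ← Measure.prod_restrict]
    exact (integrableOn_sq_div_self hρ_cont hle R).mul_prod hangular'

lemma integral_sq_div_self_le {ρ : ℝ → ℝ} (hρ : Continuous ρ) (hle : ∀ u, 0 < u → |ρ u| ≤ u)
    {R : ℝ} (hR : 0 ≤ R) : ∫ u in 0..R, ρ u ^ 2 / u ≤ R ^ 2 / 2 := by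
  calc ∫ u in 0..R, ρ u ^ 2 / u ≤ ∫ u in 0..R, u := by
        simp only [intervalIntegral_eq_setIntegral_Ioo hR]
        exact setIntegral_mono_on (integrableOn_sq_div_self hρ hle R)
          (integrableOn_Ioo_of_continuous continuous_id 0 R) measurableSet_Ioo
          fun u hu => sq_div_self_le hu.1 (hle u hu.1)
    _ = R ^ 2 / 2 := by rw [integral_id]; ring

lemma integral_radial_le (n : ℕ) {ρ : ℝ → ℝ} (hρ : ContDiff ℝ 1 ρ) (hρ' : ∀ u, |deriv ρ u| ≤ 1)
    {R : ℝ} (hR : 0 ≤ R) :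
    ∫ u in 0..R, u * (deriv ρ u ^ 2 - enneperPotential n u * ρ u ^ 2) ≤
      R ^ 2 / 2 - ∫ u in 0..R, u * ρ u ^ 2 * enneperPotential n u := by
  have hρ_cont := hρ.continuous
  have hW_cont := continuous_enneperPotential n
  have hid : ∫ u in 0..R, u = R ^ 2 / 2 := by rw [integral_id]; ring
  rw [← hid, ← intervalIntegral.integral_sub (Continuous.intervalIntegrable (by fun_prop) _ _)
    (Continuous.intervalIntegrable (by fun_prop) _ _)]
  refine intervalIntegral.integral_mono_on hR (Continuous.intervalIntegrable (by fun_prop) _ _)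
    (Continuous.intervalIntegrable (by fun_prop) _ _) fun u hu => ?_
  have hsq : deriv ρ u ^ 2 ≤ 1 := (sq_le_one_iff_abs_le_one _).2 (hρ' u)
  linarith [mul_le_mul_of_nonneg_left hsq hu.1]

lemma QE_polarFun_neg {n : ℕ} {R : ℝ} (hR : 0 ≤ R) {ρ h : ℝ → ℝ} (hρ : ContDiff ℝ 1 ρ)
    (hρ' : ∀ u, |deriv ρ u| ≤ 1) (hle : ∀ u, 0 < u → |ρ u| ≤ u) (hh : ContDiff ℝ 1 h)
    (hsupp : Function.support h ⊆ Ioo 0 (2 * π)) {μ : ℝ}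
    (hh_pos : 0 < ∫ v in 0..2 * π, h v ^ 2)
    (hh' : ∫ v in 0..2 * π, deriv h v ^ 2 ≤ μ * ∫ v in 0..2 * π, h v ^ 2)
    (hW : (1 + μ) * (R ^ 2 / 2) < ∫ u in 0..R, u * ρ u ^ 2 * enneperPotential n u) :
    QE n R (polarFun ρ h) < 0 := by
  set A := ∫ v in 0..2 * π, h v ^ 2
  set P := ∫ u in 0..R, u * ρ u ^ 2 * enneperPotential n u
  have hB_nonneg : 0 ≤ ∫ v in 0..2 * π, deriv h v ^ 2 :=
    intervalIntegral.integral_nonneg two_pi_pos.le fun v _ => sq_nonneg _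
  calc QE n R (polarFun ρ h) ≤ (R ^ 2 / 2 - P) * A + R ^ 2 / 2 * (μ * A) := by
        rw [QE_polarFun n hR hρ hle hh hsupp]
        refine add_le_add (mul_le_mul_of_nonneg_right (integral_radial_le n hρ hρ' hR) hh_pos.le) ?_
        exact mul_le_mul (integral_sq_div_self_le hρ.continuous hle hR) hh' hB_nonneg
          (by positivity)
    _ = ((1 + μ) * (R ^ 2 / 2) - P) * A := by ring
    _ < 0 := mul_neg_of_neg_of_pos (sub_neg.2 hW) hh_pos

/-! ### Profiles supported in disjoint sectors -/

lemma integral_deriv_sq_le_of_neg_mul_deriv_deriv_le {h : ℝ → ℝ} (hh : ContDiff ℝ 2 h)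
    {a b μ : ℝ} (hab : a ≤ b) (ha : h a = 0) (hb : h b = 0)
    (hle : ∀ v ∈ Icc a b, -(h v * deriv (deriv h) v) ≤ μ * h v ^ 2) :
    ∫ v in a..b, deriv h v ^ 2 ≤ μ * ∫ v in a..b, h v ^ 2 := by
  have hh' : ContDiff ℝ 1 (deriv h) := hh.deriv'
  have hh_cont := hh.continuous
  have hh'_cont := hh'.continuous
  have hh''_cont := hh'.continuous_deriv_one
  have hparts := intervalIntegral.integral_mul_deriv_eq_deriv_mul (a := a) (b := b)
    (fun v _ => (hh.differentiable two_ne_zero v).hasDerivAt)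
    (fun v _ => (hh'.differentiable one_ne_zero v).hasDerivAt)
    (hh'_cont.intervalIntegrable _ _) (hh''_cont.intervalIntegrable _ _)
  calc ∫ v in a..b, deriv h v ^ 2 = ∫ v in a..b, -(h v * deriv (deriv h) v) := by
        rw [intervalIntegral.integral_neg, hparts, ha, hb]
        simp only [sq, zero_mul, sub_self, zero_sub, neg_neg]
    _ ≤ ∫ v in a..b, μ * h v ^ 2 :=
        intervalIntegral.integral_mono_on hab (Continuous.intervalIntegrable (by fun_prop) _ _)
          (Continuous.intervalIntegrable (by fun_prop) _ _) hle
    _ = μ * ∫ v in a..b, h v ^ 2 := intervalIntegral.integral_const_mul _ _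

section DisjointSupports

variable {ι : Type*} [Fintype ι] {g : ι → ℝ → ℝ}

lemma sum_mul_eq_of_disjoint_support
    (hdisj : Pairwise fun i j => Disjoint (Function.support (g i)) (Function.support (g j)))
    (c : ι → ℝ) {k : ι} {v : ℝ} (hv : g k v ≠ 0) : ∑ j, c j * g j v = c k * g k v := by
  refine Fintype.sum_eq_single k fun j hj => ?_
  rw [Function.notMem_support.1 (Set.disjoint_left.1 (hdisj hj.symm) hv), mul_zero]

lemma neg_mul_deriv_deriv_sum_le
    (hdisj : Pairwise fun i j => Disjoint (Function.support (g i)) (Function.support (g j)))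
    (hg : ∀ k, Continuous (g k)) {μ : ℝ}
    (hle : ∀ k v, -(g k v * deriv (deriv (g k)) v) ≤ μ * g k v ^ 2) (c : ι → ℝ) (v : ℝ) :
    -((∑ k, c k * g k v) * deriv (deriv fun v => ∑ k, c k * g k v) v) ≤
      μ * (∑ k, c k * g k v) ^ 2 := by
  by_cases hv : ∃ k, g k v ≠ 0
  · obtain ⟨k, hk⟩ := hv
    have heq : (fun v => ∑ k, c k * g k v) =ᶠ[𝓝 v] fun v => c k * g k v :=
      ((hg k).continuousAt.eventually_ne hk).mono fun _ => sum_mul_eq_of_disjoint_support hdisj c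
    rw [heq.deriv.deriv_eq, heq.eq_of_nhds]
    simp only [deriv_const_mul_field']
    linarith [mul_le_mul_of_nonneg_left (hle k v) (sq_nonneg (c k))]
  · simp only [not_exists, not_not] at hv
    simp [hv]

end DisjointSupports

lemma hasDerivAt_expNegInvGlue (x : ℝ) :
    HasDerivAt expNegInvGlue (x⁻¹ ^ 2 * expNegInvGlue x) x := by
  simpa using expNegInvGlue.hasDerivAt_polynomial_eval_inv_mul 1 x

lemma hasDerivAt_inv_sq_mul_expNegInvGlue (x : ℝ) :
    HasDerivAt (fun x => x⁻¹ ^ 2 * expNegInvGlue x)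
      ((x⁻¹ ^ 4 - 2 * x⁻¹ ^ 3) * expNegInvGlue x) x := by
  have h := expNegInvGlue.hasDerivAt_polynomial_eval_inv_mul (Polynomial.X ^ 2) x
  simp only [Polynomial.derivative_X_pow, Polynomial.eval_mul, Polynomial.eval_sub,
    Polynomial.eval_pow, Polynomial.eval_X, Polynomial.eval_C, Nat.cast_ofNat] at h
  exact h.congr_deriv (by ring)

lemma deriv_deriv_expNegInvGlue_comp {p p' : ℝ → ℝ} {p'' v : ℝ} (hp : ∀ v, HasDerivAt p (p' v) v)
    (hp' : HasDerivAt p' p'' v) :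
    deriv (deriv fun v => expNegInvGlue (p v)) v =
      (p' v ^ 2 * ((p v)⁻¹ ^ 4 - 2 * (p v)⁻¹ ^ 3) + p'' * (p v)⁻¹ ^ 2) * expNegInvGlue (p v) := by
  have hderiv : deriv (fun v => expNegInvGlue (p v)) =
      fun v => (p v)⁻¹ ^ 2 * expNegInvGlue (p v) * p' v :=
    funext fun v => ((hasDerivAt_expNegInvGlue _).comp v (hp v)).deriv
  rw [hderiv]
  refine (((hasDerivAt_inv_sq_mul_expNegInvGlue _).comp v (hp v)).mul hp').deriv.trans ?_
  rw [Function.comp_apply]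
  ring

/-- A bump function with support `(0, β)`. The scaling of the quadratic inside `expNegInvGlue` is
chosen so that `-χ'' ≤ (20 / β²) χ`. -/
def sectorBump (β v : ℝ) : ℝ := expNegInvGlue (2 * v * (β - v) / β ^ 2)

lemma contDiff_sectorBump (β : ℝ) {m : ℕ∞} : ContDiff ℝ m (sectorBump β) :=
  expNegInvGlue.contDiff.comp (by fun_prop)

lemma support_sectorBump {β : ℝ} (hβ : 0 < β) : Function.support (sectorBump β) = Ioo 0 β := by
  ext v
  rw [Function.mem_support, sectorBump, Ne, expNegInvGlue.zero_iff_nonpos, not_le,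
    div_pos_iff_of_pos_right (by positivity), mem_Ioo]
  constructor
  · intro h
    constructor <;> nlinarith
  · rintro ⟨hv, hvβ⟩
    exact mul_pos (by positivity) (sub_pos.2 hvβ)

lemma neg_mul_deriv_deriv_sectorBump_le {β : ℝ} (hβ : 0 < β) (v : ℝ) :
    -(sectorBump β v * deriv (deriv (sectorBump β)) v) ≤ 20 / β ^ 2 * sectorBump β v ^ 2 := by
  rcases eq_or_ne (sectorBump β v) 0 with hzero | hne
  · simp [hzero]
  obtain ⟨hv, hvβ⟩ : v ∈ Ioo 0 β := by rwa [← support_sectorBump hβ]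
  have hquad (v : ℝ) : HasDerivAt (fun v => 2 * v * (β - v) / β ^ 2)
      (2 * (β - 2 * v) / β ^ 2) v := by
    refine ((((hasDerivAt_id v).const_mul 2).mul ((hasDerivAt_id v).const_sub β)).div_const
      (β ^ 2)).congr_deriv ?_
    simp only [id]
    ring
  have hlin : HasDerivAt (fun v => 2 * (β - 2 * v) / β ^ 2) (-4 / β ^ 2) v :=
    (((((hasDerivAt_id v).const_mul 2).const_sub β).const_mul 2).div_const
      (β ^ 2)).congr_deriv (by ring)
  set q := (2 * v * (β - v) / β ^ 2)⁻¹ with hq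
  have hq_pos : 0 < q :=
    inv_pos.2 (div_pos (mul_pos (by positivity) (sub_pos.2 hvβ)) (by positivity))
  have hslope : (2 * (β - 2 * v) / β ^ 2) ^ 2 = 4 / β ^ 2 * (1 - 2 * q⁻¹) := by
    rw [hq]
    field_simp
    ring
  have hsecond : deriv (deriv (sectorBump β)) v =
      4 / β ^ 2 * (q ^ 4 - 4 * q ^ 3 + 3 * q ^ 2) * sectorBump β v := by
    refine (deriv_deriv_expNegInvGlue_comp hquad hlin).trans ?_
    rw [← hq, hslope, sectorBump]
    field_simp
    ring
  -- The constant `20` comes from `q⁴ - 4q³ + 3q² + 5 = (q² - 2q - 1)² + (q - 2)²`.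
  have hsos : 0 ≤ 4 / β ^ 2 * sectorBump β v ^ 2 *
      ((q ^ 2 - 2 * q - 1) ^ 2 + (q - 2) ^ 2) := by positivity
  rw [hsecond]
  linear_combination hsos

/-- The copy of `sectorBump β` in the `k`-th sector. -/
def sectorProfile (β : ℝ) (k : ℕ) (v : ℝ) : ℝ := sectorBump β (v - k * β)

lemma contDiff_sectorProfile (β : ℝ) (k : ℕ) {m : ℕ∞} : ContDiff ℝ m (sectorProfile β k) :=
  (contDiff_sectorBump β).comp (by fun_prop)

lemma support_sectorProfile {β : ℝ} (hβ : 0 < β) (k : ℕ) :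
    Function.support (sectorProfile β k) = Ioo (k * β) ((k + 1) * β) := by
  ext v
  have hmem := Set.ext_iff.1 (support_sectorBump hβ) (v - k * β)
  rw [Function.mem_support] at hmem ⊢
  rw [sectorProfile, hmem, mem_Ioo, mem_Ioo]
  constructor <;> rintro ⟨h1, h2⟩ <;> constructor <;> linarith

lemma disjoint_support_sectorProfile {β : ℝ} (hβ : 0 < β) {j k : ℕ} (hjk : j ≠ k) :
    Disjoint (Function.support (sectorProfile β j)) (Function.support (sectorProfile β k)) := by
  wlog hlt : j < k generalizing j k
  · exact (this hjk.symm (hjk.lt_or_gt.resolve_left hlt)).symm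
  rw [support_sectorProfile hβ, support_sectorProfile hβ, Set.disjoint_left]
  intro v hj hk
  have hle : (j + 1 : ℝ) ≤ k := by exact_mod_cast hlt
  linarith [hj.2, hk.1, mul_le_mul_of_nonneg_right hle hβ.le]

lemma neg_mul_deriv_deriv_sectorProfile_le {β : ℝ} (hβ : 0 < β) (k : ℕ) (v : ℝ) :
    -(sectorProfile β k v * deriv (deriv (sectorProfile β k)) v) ≤
      20 / β ^ 2 * sectorProfile β k v ^ 2 := by
  have hderiv : deriv (sectorProfile β k) = fun v => deriv (sectorBump β) (v - k * β) :=
    funext fun v => deriv_comp_sub_const ..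
  rw [hderiv, deriv_comp_sub_const]
  exact neg_mul_deriv_deriv_sectorBump_le hβ _

section SectorSum

variable {β : ℝ} {N : ℕ}

lemma contDiff_sum_sectorProfile (β : ℝ) (c : Fin N → ℝ) {m : ℕ∞} :
    ContDiff ℝ m fun v => ∑ k, c k * sectorProfile β k v :=
  ContDiff.sum fun k _ => contDiff_const.mul (contDiff_sectorProfile β k)

lemma support_sectorProfile_subset (hβ : 0 < β) (hN : N * β ≤ 2 * π) (k : Fin N) :
    Function.support (sectorProfile β k) ⊆ Ioo 0 (2 * π) := by
  rw [support_sectorProfile hβ]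
  refine Ioo_subset_Ioo (by positivity) (le_trans ?_ hN)
  gcongr
  exact_mod_cast k.2

lemma support_sum_sectorProfile_subset (hβ : 0 < β) (hN : N * β ≤ 2 * π) (c : Fin N → ℝ) :
    Function.support (fun v => ∑ k, c k * sectorProfile β k v) ⊆ Ioo 0 (2 * π) := by
  refine Function.support_subset_iff'.2 fun v hv => Finset.sum_eq_zero fun k _ => ?_
  rw [Function.support_subset_iff'.1 (support_sectorProfile_subset hβ hN k) v hv, mul_zero]

lemma pairwise_disjoint_support_sectorProfile (hβ : 0 < β) :
    Pairwise fun j k : Fin N => Disjoint (Function.support (sectorProfile β j))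
      (Function.support (sectorProfile β k)) :=
  fun _ _ hjk => disjoint_support_sectorProfile hβ (Fin.val_injective.ne hjk)

lemma integral_sum_sectorProfile_sq_pos (hβ : 0 < β) (hN : N * β ≤ 2 * π) {c : Fin N → ℝ}
    (hc : c ≠ 0) : 0 < ∫ v in 0..2 * π, (∑ k, c k * sectorProfile β k v) ^ 2 := by
  obtain ⟨k, hk⟩ := Function.ne_iff.1 hc
  obtain ⟨v, hv⟩ : (Function.support (sectorProfile β k)).Nonempty := by
    rw [support_sectorProfile hβ]
    exact nonempty_Ioo.2 (by linarith)
  refine intervalIntegral.integral_pos two_pi_pos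
    ((contDiff_sum_sectorProfile β c (m := 0)).continuous.pow 2).continuousOn
    (fun _ _ => sq_nonneg _)
    ⟨v, Ioo_subset_Icc_self (support_sectorProfile_subset hβ hN k hv), ?_⟩
  rw [sum_mul_eq_of_disjoint_support (g := fun k : Fin N => sectorProfile β k)
    (pairwise_disjoint_support_sectorProfile hβ) c hv]
  exact sq_pos_of_ne_zero (mul_ne_zero hk hv)

lemma integral_deriv_sum_sectorProfile_sq_le (hβ : 0 < β) (hN : N * β ≤ 2 * π) (c : Fin N → ℝ) :
    ∫ v in 0..2 * π, deriv (fun v => ∑ k, c k * sectorProfile β k v) v ^ 2 ≤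
      20 / β ^ 2 * ∫ v in 0..2 * π, (∑ k, c k * sectorProfile β k v) ^ 2 := by
  have hzero := Function.support_subset_iff'.1 (support_sum_sectorProfile_subset hβ hN c)
  exact integral_deriv_sq_le_of_neg_mul_deriv_deriv_le (contDiff_sum_sectorProfile β c (m := 2))
    two_pi_pos.le (hzero 0 (by simp)) (hzero (2 * π) (by simp)) fun v _ =>
      neg_mul_deriv_deriv_sum_le (pairwise_disjoint_support_sectorProfile hβ)
        (fun k => (contDiff_sectorProfile β k (m := 0)).continuous)
        (fun k => neg_mul_deriv_deriv_sectorProfile_le hβ k) c v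

lemma QE_sum_sectorProfile_neg {n : ℕ} {R : ℝ} (hR : 0 ≤ R) (hβ : 0 < β) (hN : N * β ≤ 2 * π)
    {ρ : ℝ → ℝ} (hρ : ContDiff ℝ 1 ρ) (hρ' : ∀ u, |deriv ρ u| ≤ 1)
    (hle : ∀ u, 0 < u → |ρ u| ≤ u)
    (hW : (1 + 20 / β ^ 2) * (R ^ 2 / 2) < ∫ u in 0..R, u * ρ u ^ 2 * enneperPotential n u)
    {c : Fin N → ℝ} (hc : c ≠ 0) :
    QE n R (∑ k, c k • polarFun ρ (sectorProfile β k)) < 0 := by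
  rw [sum_smul_polarFun]
  exact QE_polarFun_neg hR hρ hρ' hle (contDiff_sum_sectorProfile β c (m := 1))
    (support_sum_sectorProfile_subset hβ hN c) (integral_sum_sectorProfile_sq_pos hβ hN hc)
    (integral_deriv_sum_sectorProfile_sq_le hβ hN c) hW

end SectorSum

/-! ### The radial integrals -/

lemma nat_mul_pow_two_mul_le (n : ℕ) {u : ℝ} (hu : 0 < u) :
    n * u ^ (2 * n) ≤ u ^ 2 * (1 + (n - 1) * u ^ (2 * n)) := by
  have hbernoulli : 1 + n * ((u ^ 2)⁻¹ - 1) ≤ (u ^ 2)⁻¹ ^ n :=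
    one_add_mul_sub_le_pow (by linarith [inv_pos.2 (pow_pos hu 2)]) n
  have hscaled := mul_le_mul_of_nonneg_left hbernoulli (by positivity : 0 ≤ u ^ 2 * (u ^ 2) ^ n)
  rw [inv_pow, mul_assoc _ _ ((u ^ 2) ^ n)⁻¹, mul_inv_cancel₀ (by positivity), ← pow_mul] at hscaled
  have hcancel : u ^ 2 * (u ^ 2)⁻¹ = 1 := mul_inv_cancel₀ (by positivity)
  linear_combination hscaled - n * u ^ (2 * n) * hcancel

/-- An explicit antiderivative, up to the factor `(n - 2)² / (4n²)`, of the lower bound of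
`u ^ 3 * enneperPotential n u` given by `nat_mul_pow_two_mul_le`. -/
def enneperPrimitive (n : ℕ) (u : ℝ) : ℝ :=
  log (1 + u ^ (2 * n)) - log (1 + (n - 1) * u ^ (2 * n)) - (n - 2) / (1 + u ^ (2 * n))

lemma hasDerivAt_enneperPrimitive {n : ℕ} (hn : 1 ≤ n) (u : ℝ) :
    HasDerivAt (enneperPrimitive n)
      ((n - 2) ^ 2 * u ^ (2 * n) * (2 * n * u ^ (2 * n - 1)) /
        ((1 + u ^ (2 * n)) ^ 2 * (1 + (n - 1) * u ^ (2 * n)))) u := by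
  have hy : HasDerivAt (fun u : ℝ => u ^ (2 * n)) (2 * n * u ^ (2 * n - 1)) u := by
    simpa using hasDerivAt_pow (2 * n) u
  have hpos : 1 + u ^ (2 * n) ≠ 0 := (one_add_pow_two_mul_pos n u).ne'
  have hpos' : 1 + ((n : ℝ) - 1) * u ^ (2 * n) ≠ 0 := by
    have hn' : (0 : ℝ) ≤ n - 1 := sub_nonneg.2 (by exact_mod_cast hn)
    have : 0 ≤ u ^ (2 * n) := by rw [pow_mul]; positivity
    positivity
  refine (((hy.const_add 1).log hpos).sub (((hy.const_mul _).const_add 1).log hpos')).sub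
    ((hasDerivAt_const u ((n : ℝ) - 2)).div (hy.const_add 1) hpos) |>.congr_deriv ?_
  generalize u ^ (2 * n) = y at hpos hpos' ⊢
  rw [mul_comm] at hpos'
  field_simp
  ring

lemma le_cube_mul_enneperPotential {n : ℕ} (hn : 1 ≤ n) {u : ℝ} (hu : 0 < u) :
    4 * (n : ℝ) ^ 2 * (u ^ (2 * n) * (2 * n * u ^ (2 * n - 1)) /
      ((1 + u ^ (2 * n)) ^ 2 * (1 + (n - 1) * u ^ (2 * n)))) ≤ u ^ 3 * enneperPotential n u := by
  have hn' : (0 : ℝ) ≤ n - 1 := sub_nonneg.2 (by exact_mod_cast hn)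
  have hpow : u ^ (2 * n - 1) = u ^ (2 * n - 2) * u := by
    rw [← pow_succ]
    congr 1
    omega
  calc 4 * (n : ℝ) ^ 2 * (u ^ (2 * n) * (2 * n * u ^ (2 * n - 1)) /
        ((1 + u ^ (2 * n)) ^ 2 * (1 + (n - 1) * u ^ (2 * n))))
      = n * u ^ (2 * n) / (1 + (n - 1) * u ^ (2 * n)) *
          (4 * n * (2 * n * u ^ (2 * n - 1)) / (1 + u ^ (2 * n)) ^ 2) := by
        field_simp
    _ ≤ u ^ 2 * (4 * n * (2 * n * u ^ (2 * n - 1)) / (1 + u ^ (2 * n)) ^ 2) := by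
        gcongr
        rw [div_le_iff₀ (by positivity)]
        exact nat_mul_pow_two_mul_le n hu
    _ = u ^ 3 * enneperPotential n u := by
        rw [enneperPotential, hpow]
        ring

lemma le_integral_cube_mul_enneperPotential {n : ℕ} (hn : 1 ≤ n) (hn2 : n ≠ 2) {R : ℝ}
    (hR : 0 ≤ R) :
    4 * (n : ℝ) ^ 2 / (n - 2) ^ 2 * (enneperPrimitive n R - enneperPrimitive n 0) ≤
      ∫ u in 0..R, u ^ 3 * enneperPotential n u := by
  have hn2' : (n : ℝ) - 2 ≠ 0 := sub_ne_zero.2 (by exact_mod_cast hn2)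
  have hW_cont := continuous_enneperPotential n
  have hderiv (u : ℝ) := (hasDerivAt_enneperPrimitive hn u).const_mul
    (4 * (n : ℝ) ^ 2 / (n - 2) ^ 2)
  rw [mul_sub]
  refine intervalIntegral.sub_le_integral_of_hasDeriv_right_of_le hR
    (fun u _ => (hderiv u).continuousAt.continuousWithinAt) (fun u _ => (hderiv u).hasDerivWithinAt)
    (Continuous.integrableOn_Icc (by fun_prop)) fun u hu => ?_
  refine le_of_eq_of_le ?_ (le_cube_mul_enneperPotential hn hu.1)
  field_simp

lemma threshold_lt_integral_enneperPotential_five :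
    (1 + 20 / (π / 3) ^ 2) * ((7 / 6) ^ 2 / 2) < ∫ u in 0..7 / 6, u ^ 3 * enneperPotential 5 u := by
  have hlog : log (1 + 4 * (7 / 6) ^ 10) - log (1 + (7 / 6) ^ 10) ≤ 1.2542 := by
    rw [← log_div (by norm_num) (by norm_num)]
    have hle := log_le_sub_one_of_pos
      (by norm_num : (0 : ℝ) < (1 + 4 * (7 / 6) ^ 10) / (1 + (7 / 6) ^ 10) / 2 ^ 2)
    rw [log_div (by norm_num) (by norm_num), log_pow] at hle
    norm_num at hle ⊢
    linarith [log_two_lt_d9]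
  have hπ : 20 / (π / 3) ^ 2 ≤ 18.3 := by
    rw [div_le_iff₀ (by positivity)]
    nlinarith [pi_gt_d2]
  refine lt_of_lt_of_le ?_
    (le_integral_cube_mul_enneperPotential (by norm_num) (by norm_num) (by norm_num))
  simp only [enneperPrimitive]
  norm_num at hlog ⊢
  linarith

/-- A smooth function vanishing for `u ≤ ε` and lying within `2ε` of `u` for `0 ≤ u`. It replaces
the radial factor `u` of functions that are to be smooth at the origin. -/
def radialCutoff (ε u : ℝ) : ℝ := ∫ t in 0..u, smoothTransition (t / ε - 1)

section RadialCutoff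

variable {ε : ℝ}

lemma continuous_smoothTransition_div_sub_one (ε : ℝ) :
    Continuous fun t => smoothTransition (t / ε - 1) :=
  smoothTransition.continuous.comp (by fun_prop)

lemma deriv_radialCutoff (ε : ℝ) :
    deriv (radialCutoff ε) = fun u => smoothTransition (u / ε - 1) :=
  funext ((continuous_smoothTransition_div_sub_one ε).deriv_integral _ 0)

lemma contDiff_radialCutoff (ε : ℝ) : ContDiff ℝ ∞ (radialCutoff ε) := by
  refine contDiff_infty_iff_deriv.2 ⟨fun u => ?_, ?_⟩
  · exact ((continuous_smoothTransition_div_sub_one ε).integral_hasStrictDerivAt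
      0 u).hasDerivAt.differentiableAt
  · rw [deriv_radialCutoff]
    exact smoothTransition.contDiff.comp (by fun_prop)

lemma abs_deriv_radialCutoff_le_one (ε u : ℝ) : |deriv (radialCutoff ε) u| ≤ 1 := by
  rw [deriv_radialCutoff, abs_of_nonneg (smoothTransition.nonneg _)]
  exact smoothTransition.le_one _

lemma radialCutoff_eq_zero (hε : 0 < ε) {u : ℝ} (hu : u ≤ ε) : radialCutoff ε u = 0 := by
  refine intervalIntegral.integral_zero_ae (.of_forall fun t ht => ?_)
  have hle : t ≤ ε := ht.2.trans (max_le hε.le hu)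
  exact smoothTransition.zero_of_nonpos (sub_nonpos.2 ((div_le_one hε).2 hle))

lemma radialCutoff_nonneg (ε : ℝ) {u : ℝ} (hu : 0 ≤ u) : 0 ≤ radialCutoff ε u :=
  intervalIntegral.integral_nonneg hu fun _ _ => smoothTransition.nonneg _

lemma radialCutoff_le_self (ε : ℝ) {u : ℝ} (hu : 0 ≤ u) : radialCutoff ε u ≤ u := by
  calc radialCutoff ε u ≤ ∫ _ in 0..u, (1 : ℝ) :=
        intervalIntegral.integral_mono_on hu
          ((continuous_smoothTransition_div_sub_one ε).intervalIntegrable _ _)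
          intervalIntegrable_const fun _ _ => smoothTransition.le_one _
    _ = u := by rw [integral_one, sub_zero]

lemma abs_radialCutoff_le_self (ε : ℝ) {u : ℝ} (hu : 0 ≤ u) : |radialCutoff ε u| ≤ u := by
  rw [abs_of_nonneg (radialCutoff_nonneg ε hu)]
  exact radialCutoff_le_self ε hu

lemma sub_two_mul_le_radialCutoff (hε : 0 < ε) {u : ℝ} (hu : 0 ≤ u) :
    u - 2 * ε ≤ radialCutoff ε u := by
  rcases le_total u (2 * ε) with hle | hge
  · exact (sub_nonpos.2 hle).trans (radialCutoff_nonneg ε hu)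
  have hcont := continuous_smoothTransition_div_sub_one ε
  have hone : ∫ t in 2 * ε..u, smoothTransition (t / ε - 1) = u - 2 * ε := by
    rw [← integral_one]
    refine intervalIntegral.integral_congr fun t ht => smoothTransition.one_of_one_le ?_
    rw [uIcc_of_le hge] at ht
    rw [le_sub_iff_add_le, le_div_iff₀ hε]
    linarith [ht.1]
  rw [radialCutoff, ← intervalIntegral.integral_add_adjacent_intervals
    (hcont.intervalIntegrable 0 (2 * ε)) (hcont.intervalIntegrable (2 * ε) u), hone]
  exact le_add_of_nonneg_left (radialCutoff_nonneg ε (by positivity))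

lemma sq_sub_le_radialCutoff_sq (hε : 0 < ε) {u : ℝ} (hu : 0 ≤ u) :
    u ^ 2 - 4 * ε * u ≤ radialCutoff ε u ^ 2 := by
  have hfactor : (u - radialCutoff ε u) * (u + radialCutoff ε u) ≤ 2 * ε * (2 * u) :=
    mul_le_mul (by linarith [sub_two_mul_le_radialCutoff hε hu])
      (by linarith [radialCutoff_le_self ε hu]) (by linarith [radialCutoff_nonneg ε hu])
      (by positivity)
  linear_combination hfactor

lemma integral_sub_le_integral_radialCutoff_sq (n : ℕ) (hε : 0 < ε) {R : ℝ} (hR : 0 ≤ R) :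
    (∫ u in 0..R, u ^ 3 * enneperPotential n u) -
        4 * ε * ∫ u in 0..R, u ^ 2 * enneperPotential n u ≤
      ∫ u in 0..R, u * radialCutoff ε u ^ 2 * enneperPotential n u := by
  have hW_cont := continuous_enneperPotential n
  have hρ_cont := (contDiff_radialCutoff ε).continuous
  rw [← intervalIntegral.integral_const_mul,
    ← intervalIntegral.integral_sub (Continuous.intervalIntegrable (by fun_prop) _ _)
      (Continuous.intervalIntegrable (by fun_prop) _ _)]
  refine intervalIntegral.integral_mono_on hR (Continuous.intervalIntegrable (by fun_prop) _ _)
    (Continuous.intervalIntegrable (by fun_prop) _ _) fun u hu => ?_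
  linear_combination mul_le_mul_of_nonneg_left (sq_sub_le_radialCutoff_sq hε hu.1)
    (mul_nonneg hu.1 (enneperPotential_nonneg n hu.1))

end RadialCutoff

lemma exists_lt_integral_radialCutoff_sq {n : ℕ} {R T : ℝ} (hR : 0 ≤ R)
    (hT : T < ∫ u in 0..R, u ^ 3 * enneperPotential n u) :
    ∃ ε > 0, T < ∫ u in 0..R, u * radialCutoff ε u ^ 2 * enneperPotential n u := by
  obtain ⟨ε, hε, hlt⟩ := exists_pos_mul_lt (sub_pos.2 hT)
    (4 * ∫ u in 0..R, u ^ 2 * enneperPotential n u)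
  exact ⟨ε, hε, by linarith [integral_sub_le_integral_radialCutoff_sq n hε hR]⟩

/-! ### The modified index -/

section Index

variable {ι : Type*} [Fintype ι] {n : ℕ} {R : ℝ} {Φ : ι → E2 → ℝ}

lemma memFE_of_contDiff {φ : E2 → ℝ} (hφ : ContDiff ℝ ∞ φ) (R : ℝ) : memFE R φ := by
  refine ⟨hφ.contDiffOn, fun i _ => ?_⟩
  have hcont : Continuous (iteratedFDeriv ℝ i φ) :=
    hφ.continuous_iteratedFDeriv (by exact_mod_cast le_top)
  obtain ⟨C, hC⟩ :=
    (isCompact_closedBall (0 : E2) R).exists_bound_of_continuousOn hcont.continuousOn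
  refine ⟨C, fun w hw => ?_⟩
  rw [iteratedFDerivWithin_of_isOpen i Metric.isOpen_ball hw]
  exact hC w (Metric.ball_subset_closedBall hw)

lemma QE_zero (n : ℕ) (R : ℝ) : QE n R 0 = 0 := by
  have hgrad (w : E2) : gradient (0 : E2 → ℝ) w = 0 := gradient_const w (0 : ℝ)
  simp [QE, hgrad]

lemma linearIndependent_of_QE_sum_neg
    (hneg : ∀ c : ι → ℝ, c ≠ 0 → QE n R (∑ k, c k • Φ k) < 0) : LinearIndependent ℝ Φ := by
  refine Fintype.linearIndependent_iff.2 fun c hc => congrFun ?_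
  by_contra hne
  exact (hneg c hne).ne (by rw [hc, QE_zero])

lemma card_le_indbE (hΦ : ∀ k, ContDiff ℝ ∞ (Φ k))
    (hneg : ∀ c : ι → ℝ, c ≠ 0 → QE n R (∑ k, c k • Φ k) < 0) :
    (Fintype.card ι : ℕ∞) ≤ indbE n R := by
  refine le_sSup ⟨Submodule.span ℝ (range Φ), FiniteDimensional.span_of_finite ℝ (finite_range Φ),
    fun φ hφ => ?_, fun φ hφ hne => ?_, ?_⟩
  · obtain ⟨c, rfl⟩ := (Submodule.mem_span_range_iff_exists_fun ℝ).1 hφ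
    rw [Finset.sum_fn]
    exact memFE_of_contDiff (ContDiff.sum fun k _ => (hΦ k).const_smul (c k)) R
  · obtain ⟨c, rfl⟩ := (Submodule.mem_span_range_iff_exists_fun ℝ).1 hφ
    refine hneg c ?_
    rintro rfl
    simp at hne
  · rw [finrank_span_eq_card (linearIndependent_of_QE_sum_neg hneg)]

lemma QE_neg_of_QE_sum_neg
    (hneg : ∀ c : ι → ℝ, c ≠ 0 → QE n R (∑ k, c k • Φ k) < 0) (k : ι) : QE n R (Φ k) < 0 := by
  classical
  simpa [Pi.single_apply] using hneg (Pi.single k 1) (by simp)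

end Index

lemma le_indbE_of_lt_integral_enneperPotential {n N : ℕ} {R β : ℝ} (hR : 0 ≤ R) (hβ : 0 < β)
    (hN : N * β ≤ 2 * π)
    (hW : (1 + 20 / β ^ 2) * (R ^ 2 / 2) < ∫ u in 0..R, u ^ 3 * enneperPotential n u) :
    N ≤ indbE n R := by
  obtain ⟨ε, hε, hlt⟩ := exists_lt_integral_radialCutoff_sq hR hW
  rw [← Fintype.card_fin N]
  exact card_le_indbE (Φ := fun k : Fin N => polarFun (radialCutoff ε) (sectorProfile β k))
    (fun k => contDiff_polarFun (contDiff_radialCutoff ε) (contDiff_sectorProfile β k)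
      (support_sectorProfile_subset hβ hN k) hε fun _ hu => radialCutoff_eq_zero hε hu)
    fun c hc => QE_sum_sectorProfile_neg hR hβ hN ((contDiff_radialCutoff ε).of_le (by simp))
      (abs_deriv_radialCutoff_le_one ε) (fun _ hu => abs_radialCutoff_le_self ε hu.le) hlt hc

theorem enneper5_indb_ge_six_general {n N : ℕ} {R β : ℝ} (hR : 0 ≤ R) (hβ : 0 < β)
    (hN : N * β ≤ 2 * π)
    (hW : (1 + 20 / β ^ 2) * (R ^ 2 / 2) < ∫ u in 0..R, u ^ 3 * enneperPotential n u) :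
    ∃ χ : ℝ → ℝ, χ ≠ 0 ∧ ContDiff ℝ ∞ χ ∧ Function.support χ ⊆ Ioo 0 β ∧
    ∃ Φ : Fin N → E2 → ℝ,
      (∀ k : Fin N, ∀ u : ℝ, 0 < u → ∀ v ∈ Ico 0 (2 * π),
        Φ k (toE2 (u * cos v) (u * sin v)) = u * χ (v - (k : ℕ) * β)) ∧
      (∀ k m : Fin N, k ≠ m →
        Disjoint (Function.support (Φ k)) (Function.support (Φ m))) ∧
      (∀ k : Fin N, QE n R (Φ k) < 0) ∧
      LinearIndependent ℝ Φ ∧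
      (∀ c : Fin N → ℝ, c ≠ 0 → QE n R (∑ k, c k • Φ k) < 0) ∧
      N ≤ indbE n R := by
  have hsupp := support_sectorBump hβ
  have hid : ∫ u in 0..R, u * id u ^ 2 * enneperPotential n u =
      ∫ u in 0..R, u ^ 3 * enneperPotential n u := by simp only [id, pow_succ']
  have hneg (c : Fin N → ℝ) (hc : c ≠ 0) :
      QE n R (∑ k, c k • polarFun id (sectorProfile β k)) < 0 :=
    QE_sum_sectorProfile_neg hR hβ hN contDiff_id (by simp) (fun _ hu => (abs_of_pos hu).le)
      (hW.trans_eq hid.symm) hc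
  refine ⟨sectorBump β, ?_, contDiff_sectorBump β, hsupp.subset,
    fun k => polarFun id (sectorProfile β k), fun k u hu v hv => ?_, fun k m hkm => ?_,
    QE_neg_of_QE_sum_neg hneg, linearIndependent_of_QE_sum_neg hneg, hneg,
    le_indbE_of_lt_integral_enneperPotential hR hβ hN hW⟩
  · rw [← Function.support_nonempty_iff, hsupp]
    exact nonempty_Ioo.2 hβ
  · exact polarFun_polarPoint id (support_sectorProfile_subset hβ hN k) hu (Ico_subset_Icc_self hv)
  · exact disjoint_support_polarFun id (pairwise_disjoint_support_sectorProfile hβ hkm)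

/-- there are a radius `R ∈ (1.16, 1.17)` and a nonzero smooth bump
function `χ` supported in `(0, π/3)` such that the six rotated functions
`φ_k(u cos v, u sin v) = u·χ(v − kπ/3)`, `k = 0, …, 5`, have pairwise disjoint supports,
each satisfies `Q⁵_R(φ_k) < 0`, and `Q⁵_R` is negative definite on their 6-dimensional
linear span; consequently `ind_b(Σ₁⁵(R)) ≥ 6`. -/
theorem enneper5_indb_ge_six :
    ∃ R : ℝ, 1.16 < R ∧ R < 1.17 ∧
    ∃ χ : ℝ → ℝ, χ ≠ 0 ∧ ContDiff ℝ (⊤ : ℕ∞) χ ∧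
      Function.support χ ⊆ Set.Ioo 0 (π / 3) ∧
    ∃ Φ : Fin 6 → (E2 → ℝ),
      (∀ k : Fin 6, ∀ u : ℝ, 0 < u → ∀ v ∈ Set.Ico 0 (2 * π),
        Φ k (toE2 (u * Real.cos v) (u * Real.sin v)) = u * χ (v - (k : ℕ) * π / 3)) ∧
      (∀ k m : Fin 6, k ≠ m →
        Disjoint (Function.support (Φ k)) (Function.support (Φ m))) ∧
      (∀ k : Fin 6, QE 5 R (Φ k) < 0) ∧
      LinearIndependent ℝ Φ ∧
      (∀ c : Fin 6 → ℝ, c ≠ 0 → QE 5 R (∑ k, c k • Φ k) < 0) ∧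
      6 ≤ indbE 5 R := by
  have h := enneper5_indb_ge_six_general (n := 5) (N := 6) (R := 7 / 6) (β := π / 3)
    (by norm_num) (by positivity) (by push_cast; linarith)
    threshold_lt_integral_enneperPotential_five
  simp only [← mul_div_assoc] at h
  exact ⟨7 / 6, by norm_num, by norm_num, h⟩
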